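/- For n ≥ 2, let gt_n, eq_n, lt_n be the numbers of parking functions a of length n with a_1 > a_2, a_1 = a_2, a_1 < a_2 respectively, and let p1 ≥ p2 ≥ p3 be these three numbers sorted in decreasing order. Let r1 ≥ r2 ≥ r3 be, sorted in decreasing order, the numbers of regions R of the Shi arrangement S_n satisfying respectively x_1 − x_2 < 0 for all x ∈ R, 0 < x_1 − x_2 < 1 for all x ∈ R, and x_1 − x_2 > 1 for all x ∈ R. Then the first triple majorises the second: p1 ≥ r1, p1 + p2 ≥ r1 + r2, and p1 + p2 + p3 = r1 + r2 + r3. -/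

import Mathlib

/-!
The proof compares explicit numbers. Write `e = (n + 1) ^ (n - 2)`.

On the parking side, exactly one of the `n + 1` rotations of a function to `ℤ / (n + 1)` is a
parking function (the cycle lemma, `existsUnique_rotation`). Since rotations
preserve the condition `a_1 = a_2`, there are `(n + 1) ^ (n - 1)` parking functions, of which `e`
have `a_1 = a_2`. Exchanging `a_1` and `a_2` shows that the other two numbers are equal, say to `a`;
thus `2 a + e = (n + 1) ^ (n - 1)`, and `e ≤ a`.

On the Shi side, let `L`, `M`, `G` be the numbers of regions with `x_1 - x_2 < 0`, in `(0, 1)` and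
`> 1`. Regions are the nonempty sign classes, called cells here, of the functions `x_i - x_j - c`
(`connectedComponentIn_shiComp`). Deleting `x_1 - x_2 = 0` and `x_1 - x_2 = 1` leaves an arrangement
that is invariant under exchanging `x_1` and `x_2`, so `L` is also the number of cells of this
arrangement in `x_1 - x_2 > 0`. Cutting the latter along `H = {x_1 - x_2 = 1}` adds as many cells as
there are cells on `H`, namely `e`, so `M + G = L + e`. Moreover every cell on `H` bounds a cell on
each side of `H`, so `M, G ≥ e`.

The total number `(n + 1) ^ (n - 1)` of regions and the number `e` of cells on `H` both come from
`cellCount_pointed`, an induction by deletion–restriction over Shi arrangements in coordinates `x_j`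
extended by one coordinate `y` and hyperplanes `y - x_j = c`.

Hence `2 L + e = (n + 1) ^ (n - 1)`, that is `L = a`, and `M + G = a + e` with `M, G ≥ e`. So `L`,
`M`, `G` all lie between `e` and `a` and have the same sum as `a`, `a`, `e`, which is the
majorisation.
-/

/-- The complement of the union of the hyperplanes of the Shi arrangement `S_n`:
the hyperplanes are `x i - x j = c` for `i < j` and `c ∈ {0, 1}`. -/
def shiComp (n : ℕ) : Set (Fin n → ℝ) :=
  {x | ∀ i j : Fin n, i < j → x i - x j ≠ 0 ∧ x i - x j ≠ 1}

/-- A region of the Shi arrangement: a connected component of the complement of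
the union of the hyperplanes. -/
def IsShiRegion (n : ℕ) (R : Set (Fin n → ℝ)) : Prop :=
  ∃ x ∈ shiComp n, R = connectedComponentIn (shiComp n) x

/-- A parking function of length `n`: a function `a : Fin n → ℕ` such that for
every `k ≤ n`, at least `k` of the entries are `< k`. -/
def IsPF (n : ℕ) (a : Fin n → ℕ) : Prop :=
  ∀ k : ℕ, k ≤ n → k ≤ (Finset.univ.filter (fun i => a i < k)).card

/-! ### Counting the cells of a finite affine arrangement -/

section Cells

variable {E E' : Type*}

/-- The sign pattern of `x` with respect to the functions in `A`: those that are positive at `x`. -/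
def signPattern (A : Set (E → ℝ)) (x : E) : Set (E → ℝ) := {f | f ∈ A ∧ 0 < f x}

/-- The points of `W` that lie on none of the hyperplanes `f = 0`, `f ∈ A`. -/
def offPoints (A : Set (E → ℝ)) (W : Set E) : Set E := {x | x ∈ W ∧ ∀ f ∈ A, f x ≠ 0}

/-- The set of sign patterns of `A` realised by points of `W` off the hyperplanes. -/
def cells (A : Set (E → ℝ)) (W : Set E) : Set (Set (E → ℝ)) := signPattern A '' offPoints A W

/-- The number of cells cut out by `A` on `W`, a cell being identified with its sign pattern. -/
noncomputable def cellCount (A : Set (E → ℝ)) (W : Set E) : ℕ := (cells A W).ncard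

lemma signPattern_eq_iff {A : Set (E → ℝ)} {x y : E} :
    signPattern A x = signPattern A y ↔ ∀ f ∈ A, (0 < f x ↔ 0 < f y) := by
  simp only [signPattern, Set.ext_iff, Set.mem_ofPred_eq]
  exact ⟨fun h f hf => by simpa [hf] using h f, fun h f => and_congr_right (h f)⟩

lemma finite_cells {A : Set (E → ℝ)} (hA : A.Finite) (W : Set E) : (cells A W).Finite :=
  hA.finite_subsets.subset (by rintro _ ⟨x, -, rfl⟩ f hf; exact hf.1)

lemma ncard_image_eq_of_fibers {X Y Z : Type*} (S : Set X) (F : X → Y) (G : X → Z)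
    (h : ∀ x ∈ S, ∀ y ∈ S, (F x = F y ↔ G x = G y)) : (F '' S).ncard = (G '' S).ncard := by
  refine Set.ncard_congr (fun a ha => G ha.choose) ?_ ?_ ?_
  · intro a ha
    exact ⟨_, ha.choose_spec.1, rfl⟩
  · intro a b ha hb hab
    rw [← h _ ha.choose_spec.1 _ hb.choose_spec.1, ha.choose_spec.2, hb.choose_spec.2] at hab
    exact hab
  · rintro _ ⟨x, hx, rfl⟩
    have ha : F x ∈ F '' S := ⟨x, hx, rfl⟩
    exact ⟨F x, ha, (h _ ha.choose_spec.1 _ hx).1 ha.choose_spec.2⟩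

/-- Invariance of the number of cells under a parametrisation `T` of `W` by `W'`: the pullbacks of
the functions in `A` must be, up to sign, the functions in `B`, except that pullbacks of constant
sign may be dropped. -/
lemma cellCount_transport {A : Set (E → ℝ)} {W : Set E} {B : Set (E' → ℝ)} {W' : Set E'}
    (T : E' → E) (hT : Set.image T W' = W)
    (h1 : ∀ f ∈ A, (∃ g ∈ B, (∀ x ∈ W', f (T x) = g x) ∨ (∀ x ∈ W', f (T x) = - g x)) ∨
      (∀ x ∈ W', 0 < f (T x)) ∨ (∀ x ∈ W', f (T x) < 0))
    (h2 : ∀ g ∈ B, ∃ f ∈ A, (∀ x ∈ W', f (T x) = g x) ∨ (∀ x ∈ W', f (T x) = - g x)) :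
    cellCount A W = cellCount B W' := by
  have hgood : ∀ x ∈ W', (∀ f ∈ A, f (T x) ≠ 0) ↔ (∀ g ∈ B, g x ≠ 0) := by
    intro x hx
    constructor
    · intro h g hg
      obtain ⟨f, hf, e | e⟩ := h2 g hg
      · rw [← e x hx]; exact h f hf
      · have := h f hf
        rw [e x hx] at this; simpa using this
    · intro h f hf
      obtain ⟨g, hg, e | e⟩ | e | e := h1 f hf
      · rw [e x hx]; exact h g hg
      · rw [e x hx]; simpa using h g hg
      · exact (e x hx).ne'
      · exact (e x hx).ne
  have himg : offPoints A W = T '' offPoints B W' := by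
    ext z
    constructor
    · rintro ⟨hz, hz'⟩
      rw [← hT] at hz
      obtain ⟨x, hx, rfl⟩ := hz
      exact ⟨x, ⟨hx, (hgood x hx).1 hz'⟩, rfl⟩
    · rintro ⟨x, ⟨hx, hx'⟩, rfl⟩
      exact ⟨hT ▸ ⟨x, hx, rfl⟩, (hgood x hx).2 hx'⟩
  unfold cellCount cells
  rw [himg, Set.image_image]
  refine ncard_image_eq_of_fibers _ _ _ ?_
  rintro x ⟨hx, hx'⟩ y ⟨hy, hy'⟩
  rw [signPattern_eq_iff, signPattern_eq_iff]
  have hneg : ∀ g ∈ B, (0 < -g x ↔ 0 < -g y) ↔ (0 < g x ↔ 0 < g y) := by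
    intro g hg
    have a := hx' g hg
    have b := hy' g hg
    have a' : 0 < -g x ↔ ¬ 0 < g x := by
      rw [neg_pos, not_lt]; exact ⟨le_of_lt, fun h => lt_of_le_of_ne h a⟩
    have b' : 0 < -g y ↔ ¬ 0 < g y := by
      rw [neg_pos, not_lt]; exact ⟨le_of_lt, fun h => lt_of_le_of_ne h b⟩
    rw [a', b', not_iff_not]
  constructor
  · intro h g hg
    obtain ⟨f, hf, e | e⟩ := h2 g hg
    · rw [← e x hx, ← e y hy]; exact h f hf
    · have := h f hf
      rw [e x hx, e y hy] at this
      exact (hneg g hg).1 this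
  · intro h f hf
    obtain ⟨g, hg, e | e⟩ | e | e := h1 f hf
    · rw [e x hx, e y hy]; exact h g hg
    · rw [e x hx, e y hy]; exact (hneg g hg).2 (h g hg)
    · exact iff_of_true (e x hx) (e y hy)
    · exact iff_of_false (e x hx).not_gt (e y hy).not_gt

lemma cellCount_insert_of_const {A : Set (E → ℝ)} {f : E → ℝ} {W : Set E}
    (h : (∀ x ∈ W, 0 < f x) ∨ (∀ x ∈ W, f x < 0)) :
    cellCount (insert f A) W = cellCount A W := by
  refine cellCount_transport id (by simp) ?_ ?_
  · rintro g (rfl | hg)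
    · exact Or.inr h
    · exact Or.inl ⟨g, hg, Or.inl fun _ _ => rfl⟩
  · intro g hg
    exact ⟨g, Set.mem_insert_of_mem _ hg, Or.inl fun _ _ => rfl⟩

/-- Adjoining `f` splits the cells according to the sign of `f`. -/
lemma cellCount_insert_eq_add {A : Set (E → ℝ)} (hA : A.Finite) (f : E → ℝ) (W : Set E) :
    cellCount (insert f A) W = cellCount A (W ∩ {x | 0 < f x}) +
      cellCount A (W ∩ {x | f x < 0}) := by
  have hoff : offPoints (insert f A) W =
      offPoints (insert f A) (W ∩ {x | 0 < f x}) ∪ offPoints (insert f A) (W ∩ {x | f x < 0}) := by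
    ext x
    simp only [offPoints, Set.mem_ofPred_eq, Set.mem_union, Set.mem_inter_iff, Set.mem_insert_iff,
      forall_eq_or_imp]
    constructor
    · rintro ⟨a, b, c⟩
      rcases lt_or_gt_of_ne b with h | h
      · exact Or.inr ⟨⟨a, h⟩, b, c⟩
      · exact Or.inl ⟨⟨a, h⟩, b, c⟩
    · rintro (⟨⟨a, -⟩, b⟩ | ⟨⟨a, -⟩, b⟩)
      · exact ⟨a, b⟩
      · exact ⟨a, b⟩
  have hsplit : cells (insert f A) W =
      cells (insert f A) (W ∩ {x | 0 < f x}) ∪ cells (insert f A) (W ∩ {x | f x < 0}) := by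
    unfold cells
    rw [hoff, Set.image_union]
  have hdisj : Disjoint (cells (insert f A) (W ∩ {x | 0 < f x}))
      (cells (insert f A) (W ∩ {x | f x < 0})) := by
    rw [Set.disjoint_left]
    rintro _ ⟨x, ⟨⟨-, hx⟩, -⟩, rfl⟩ ⟨y, ⟨⟨-, hy⟩, -⟩, hxy⟩
    have := (signPattern_eq_iff.1 hxy) f (Set.mem_insert _ _)
    exact absurd (this.2 hx) (not_lt.2 (le_of_lt hy))
  have hfin := hA.insert f
  rw [← cellCount_insert_of_const (W := W ∩ {x | 0 < f x}) (Or.inl fun x hx => hx.2),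
    ← cellCount_insert_of_const (W := W ∩ {x | f x < 0}) (Or.inr fun x hx => hx.2)]
  unfold cellCount
  rw [hsplit, Set.ncard_union_eq hdisj (finite_cells hfin _) (finite_cells hfin _)]

variable [AddCommGroup E] [Module ℝ E]

/-- `f` is affine along every line. -/
def IsAff (f : E → ℝ) : Prop :=
  ∀ (x v : E) (t : ℝ), f (x + t • v) = f x + t * (f (x + v) - f x)

/-- Every line through a point of `W` stays in `W` near that point. -/
def AlgOpen (W : Set E) : Prop :=
  ∀ x ∈ W, ∀ v : E, ∀ᶠ t in nhds (0 : ℝ), x + t • v ∈ W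

lemma algOpen_univ : AlgOpen (Set.univ : Set E) := fun _ _ _ => by simp

lemma IsAff.eventually_pos {f : E → ℝ} (hf : IsAff f) {x : E} (hx : 0 < f x) (v : E) :
    ∀ᶠ t in nhds (0 : ℝ), 0 < f (x + t • v) := by
  have hc : Continuous fun t : ℝ => f x + t * (f (x + v) - f x) := by fun_prop
  have : ∀ᶠ t in nhds (0 : ℝ), 0 < f x + t * (f (x + v) - f x) :=
    hc.continuousAt.eventually (lt_mem_nhds (by simpa using hx))
  filter_upwards [this] with t ht
  rwa [hf]

lemma IsAff.eventually_neg {f : E → ℝ} (hf : IsAff f) {x : E} (hx : f x < 0) (v : E) :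
    ∀ᶠ t in nhds (0 : ℝ), f (x + t • v) < 0 := by
  have hc : Continuous fun t : ℝ => f x + t * (f (x + v) - f x) := by fun_prop
  have : ∀ᶠ t in nhds (0 : ℝ), f x + t * (f (x + v) - f x) < 0 :=
    hc.continuousAt.eventually (gt_mem_nhds (by simpa using hx))
  filter_upwards [this] with t ht
  rwa [hf]

/-- A cell of the restriction to `f = 0` extends to both sides of that hyperplane: move a little
along a direction `v` that increases `f`. -/
lemma cells_restrict_subset {A : Set (E → ℝ)} (hA : A.Finite) (hAff : ∀ g ∈ A, IsAff g)
    {f : E → ℝ} (hf : IsAff f) (hv : ∃ v : E, ∀ x, f (x + v) = f x + 1) {W : Set E}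
    (hW : AlgOpen W) :
    cells A (W ∩ {x | f x = 0}) ⊆ cells A (W ∩ {x | 0 < f x}) ∩ cells A (W ∩ {x | f x < 0}) := by
  rintro _ ⟨x, ⟨⟨hxW, hx0⟩, hx⟩, rfl⟩
  obtain ⟨v, hv⟩ := hv
  have hfx : ∀ t : ℝ, f (x + t • v) = t := by
    intro t
    rw [hf, hv, hx0]; ring
  have hsame : ∀ᶠ t in nhds (0 : ℝ), ∀ g ∈ A, g (x + t • v) ≠ 0 ∧
      (0 < g (x + t • v) ↔ 0 < g x) := by
    rw [Filter.eventually_all_finite hA]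
    intro g hg
    rcases lt_or_gt_of_ne (hx g hg) with h | h
    · filter_upwards [(hAff g hg).eventually_neg h v] with t ht
      exact ⟨ht.ne, iff_of_false ht.not_gt h.not_gt⟩
    · filter_upwards [(hAff g hg).eventually_pos h v] with t ht
      exact ⟨ht.ne', iff_of_true ht h⟩
  have hall := hsame.and (hW x hxW v)
  rw [Metric.eventually_nhds_iff] at hall
  obtain ⟨ε, hε, hall⟩ := hall
  constructor
  · obtain ⟨h1, h2⟩ := @hall (ε / 2) (by
      rw [Real.dist_eq, sub_zero, abs_of_pos (by linarith)]; linarith)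
    refine ⟨x + (ε / 2) • v, ⟨⟨h2, ?_⟩, fun g hg => (h1 g hg).1⟩, ?_⟩
    · change 0 < f _
      rw [hfx]; linarith
    · rw [signPattern_eq_iff]; exact fun g hg => (h1 g hg).2
  · obtain ⟨h1, h2⟩ := @hall (-(ε / 2)) (by
      rw [Real.dist_eq, sub_zero, abs_neg, abs_of_pos (by linarith)]; linarith)
    refine ⟨x + (-(ε / 2)) • v, ⟨⟨h2, ?_⟩, fun g hg => (h1 g hg).1⟩, ?_⟩
    · change f _ < 0
      rw [hfx]; linarith
    · rw [signPattern_eq_iff]; exact fun g hg => (h1 g hg).2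

lemma IsAff.pos_of_segment {f : E → ℝ} (hf : IsAff f) {x y : E} {t : ℝ} (h0 : 0 ≤ t) (h1 : t ≤ 1)
    (hx : 0 < f x) (hy : 0 < f y) : 0 < f (x + t • (y - x)) := by
  rw [hf, add_sub_cancel]
  rcases eq_or_lt_of_le h0 with rfl | h0
  · simpa using hx
  · nlinarith [mul_pos h0 hy, mul_nonneg (sub_nonneg.2 h1) hx.le]

lemma IsAff.neg_of_segment {f : E → ℝ} (hf : IsAff f) {x y : E} {t : ℝ} (h0 : 0 ≤ t) (h1 : t ≤ 1)
    (hx : f x < 0) (hy : f y < 0) : f (x + t • (y - x)) < 0 := by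
  rw [hf, add_sub_cancel]
  rcases eq_or_lt_of_le h0 with rfl | h0
  · simpa using hx
  · nlinarith [mul_pos h0 (neg_pos.2 hy), mul_nonneg (sub_nonneg.2 h1) (neg_pos.2 hx).le]

/-- Cells are convex. -/
lemma same_sign_segment {A : Set (E → ℝ)} (hAff : ∀ g ∈ A, IsAff g) {x y : E}
    (hx : ∀ g ∈ A, g x ≠ 0) (hy : ∀ g ∈ A, g y ≠ 0) (hxy : signPattern A x = signPattern A y)
    {t : ℝ} (h0 : 0 ≤ t) (h1 : t ≤ 1) :
    (∀ g ∈ A, g (x + t • (y - x)) ≠ 0) ∧ signPattern A (x + t • (y - x)) = signPattern A x := by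
  rw [signPattern_eq_iff] at hxy ⊢
  have : ∀ g ∈ A, g (x + t • (y - x)) ≠ 0 ∧ (0 < g (x + t • (y - x)) ↔ 0 < g x) := by
    intro g hg
    rcases lt_or_gt_of_ne (hx g hg) with h | h
    · have h' : g y < 0 := lt_of_le_of_ne (not_lt.1 (fun h' => h.not_gt ((hxy g hg).2 h'))) (hy g hg)
      have := (hAff g hg).neg_of_segment h0 h1 h h'
      exact ⟨this.ne, iff_of_false this.not_gt h.not_gt⟩
    · have := (hAff g hg).pos_of_segment h0 h1 h ((hxy g hg).1 h)
      exact ⟨this.ne', iff_of_true this h⟩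
  exact ⟨fun g hg => (this g hg).1, fun g hg => (this g hg).2⟩

/-- The cells of `A` on the two open sides of `f = 0` overlap exactly in the cells of the
restriction to `f = 0`. -/
lemma cellCount_sides {A : Set (E → ℝ)} (hA : A.Finite) (hAff : ∀ g ∈ A, IsAff g)
    {f : E → ℝ} (hf : IsAff f) (hv : ∃ v : E, ∀ x, f (x + v) = f x + 1) {W : Set E}
    (hW : AlgOpen W) (hWc : Convex ℝ W) :
    cellCount A (W ∩ {x | 0 < f x}) + cellCount A (W ∩ {x | f x < 0}) =
      cellCount A W + cellCount A (W ∩ {x | f x = 0}) := by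
  have hsub := cells_restrict_subset hA hAff hf hv hW
  have hinter : cells A (W ∩ {x | 0 < f x}) ∩ cells A (W ∩ {x | f x < 0}) =
      cells A (W ∩ {x | f x = 0}) := by
    refine Set.Subset.antisymm ?_ hsub
    rintro _ ⟨⟨x, ⟨⟨hxW, hx0⟩, hx⟩, rfl⟩, ⟨y, ⟨⟨hyW, hy0⟩, hy⟩, hxy⟩⟩
    change 0 < f x at hx0
    change f y < 0 at hy0
    -- the point where the segment from `x` to `y` crosses `f = 0`
    have hd : 0 < f x - f y := by linarith
    have h0 : 0 ≤ f x / (f x - f y) := by positivity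
    have h1 : f x / (f x - f y) ≤ 1 := by rw [div_le_one hd]; linarith
    obtain ⟨ha, hb⟩ := same_sign_segment hAff hx hy hxy.symm h0 h1
    refine ⟨x + (f x / (f x - f y)) • (y - x), ⟨⟨?_, ?_⟩, ha⟩, hb⟩
    · exact hWc.add_smul_sub_mem hxW hyW ⟨h0, h1⟩
    · change f _ = 0
      rw [hf, add_sub_cancel]
      field_simp
      ring
  have hunion : cells A (W ∩ {x | 0 < f x}) ∪ cells A (W ∩ {x | f x < 0}) = cells A W := by
    have hW3 : cells A W = cells A (W ∩ {x | 0 < f x}) ∪ cells A (W ∩ {x | f x < 0}) ∪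
        cells A (W ∩ {x | f x = 0}) := by
      unfold cells
      rw [← Set.image_union, ← Set.image_union]
      congr 1
      ext x
      simp only [offPoints, Set.mem_ofPred_eq, Set.mem_union, Set.mem_inter_iff]
      rcases lt_trichotomy (f x) 0 with h | h | h
      · simp [h, h.ne, h.not_gt]
      · simp [h]
      · simp [h, h.ne', h.not_gt]
    rw [hW3, ← hinter]
    refine (Set.union_eq_left.2 ?_).symm
    exact fun s hs => Or.inl hs.1
  unfold cellCount
  rw [← hunion, ← hinter]
  exact (Set.ncard_union_add_ncard_inter _ _ (finite_cells hA _) (finite_cells hA _)).symm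

/-- Deletion–restriction. -/
lemma cellCount_insert {A : Set (E → ℝ)} (hA : A.Finite) (hAff : ∀ g ∈ A, IsAff g)
    {f : E → ℝ} (hf : IsAff f) (hv : ∃ v : E, ∀ x, f (x + v) = f x + 1) :
    cellCount (insert f A) Set.univ = cellCount A Set.univ + cellCount A {x | f x = 0} := by
  rw [cellCount_insert_eq_add hA, cellCount_sides hA hAff hf hv algOpen_univ convex_univ,
    Set.univ_inter]

end Cells

/-! ### Shi arrangements with one additional coordinate -/

section Shi

/-- The functions `x i - x j - c`, `i < j`, `c ∈ {0, 1}`, whose zero sets are the hyperplanes of the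
Shi arrangement. -/
def shiFun (m : ℕ) : Set ((Fin m → ℝ) → ℝ) :=
  {f | ∃ i j : Fin m, i < j ∧ ∃ c : ℕ, c ≤ 1 ∧ f = fun x : Fin m → ℝ => x i - x j - c}

/-- The Shi arrangement in coordinates `x` together with the hyperplanes `y - x j = c`,
`0 ≤ c < d j`, in the space of pairs `(y, x)`. -/
def pointed (m : ℕ) (d : Fin m → ℕ) : Set (ℝ × (Fin m → ℝ) → ℝ) :=
  {f |
    (∃ i j : Fin m, i < j ∧ ∃ c : ℕ, c ≤ 1 ∧
      f = fun z : ℝ × (Fin m → ℝ) => z.2 i - z.2 j - c) ∨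
    ∃ j : Fin m, ∃ c : ℕ, c < d j ∧ f = fun z : ℝ × (Fin m → ℝ) => z.1 - z.2 j - c}

lemma finite_shiFun (m : ℕ) : (shiFun m).Finite := by
  refine (Set.finite_range (fun q : Fin m × Fin m × Fin 2 =>
    (fun x : Fin m → ℝ => x q.1 - x q.2.1 - (q.2.2.val : ℕ)))).subset ?_
  rintro f ⟨i, j, -, c, hc, rfl⟩
  exact ⟨(i, j, ⟨c, by omega⟩), rfl⟩

lemma isAff_shiFun {m : ℕ} : ∀ f ∈ shiFun m, IsAff f := by
  rintro f ⟨i, j, -, c, -, rfl⟩ x v t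
  simp only [Pi.add_apply, Pi.smul_apply, smul_eq_mul]
  ring

lemma finite_pointed (m : ℕ) (d : Fin m → ℕ) : (pointed m d).Finite := by
  have h1 := Set.finite_range (fun q : Fin m × Fin m × Fin 2 =>
    (fun z : ℝ × (Fin m → ℝ) => z.2 q.1 - z.2 q.2.1 - (q.2.2.val : ℕ)))
  have h2 := Set.finite_range (fun q : (j : Fin m) × Fin (d j) =>
    (fun z : ℝ × (Fin m → ℝ) => z.1 - z.2 q.1 - (q.2.val : ℕ)))
  refine (h1.union h2).subset ?_
  rintro f (⟨i, j, -, c, hc, rfl⟩ | ⟨j, c, hc, rfl⟩)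
  · exact Or.inl ⟨(i, j, ⟨c, by omega⟩), rfl⟩
  · exact Or.inr ⟨⟨j, ⟨c, hc⟩⟩, rfl⟩

lemma isAff_pointed_fun {m : ℕ} (j : Fin m) (c : ℝ) :
    IsAff (fun z : ℝ × (Fin m → ℝ) => z.1 - z.2 j - c) := by
  intro x v t
  simp only [Prod.fst_add, Prod.snd_add, Prod.smul_fst, Prod.smul_snd, Pi.add_apply, Pi.smul_apply,
    smul_eq_mul]
  ring

lemma isAff_pointed {m : ℕ} {d : Fin m → ℕ} : ∀ f ∈ pointed m d, IsAff f := by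
  rintro f (⟨i, j, -, c, hc, rfl⟩ | ⟨j, c, hc, rfl⟩)
  · intro x v t
    simp only [Prod.snd_add, Prod.smul_snd, Pi.add_apply, Pi.smul_apply, smul_eq_mul]
    ring
  · exact isAff_pointed_fun j c

/-- Deletion–restriction for the hyperplane `y - x p = d p`. -/
lemma cellCount_pointed_succ {m : ℕ} {d e : Fin m → ℕ} (p : Fin m) (hp : e p = d p + 1)
    (he : ∀ j, j ≠ p → e j = d j) :
    cellCount (pointed m e) Set.univ = cellCount (pointed m d) Set.univ +
      cellCount (pointed m d) {z | z.1 - z.2 p - (d p : ℝ) = 0} := by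
  have h : pointed m e = insert (fun z => z.1 - z.2 p - (d p : ℝ)) (pointed m d) := by
    ext f
    constructor
    · rintro (h | ⟨j, c, hc, rfl⟩)
      · exact Or.inr (Or.inl h)
      · by_cases hj : j = p
        · subst hj
          rw [hp] at hc
          rcases Nat.lt_succ_iff_lt_or_eq.1 hc with h | h
          · exact Or.inr (Or.inr ⟨j, c, h, rfl⟩)
          · left; rw [h]
        · exact Or.inr (Or.inr ⟨j, c, he j hj ▸ hc, rfl⟩)
    · rintro (rfl | h | ⟨j, c, hc, rfl⟩)
      · exact Or.inr ⟨p, d p, by omega, rfl⟩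
      · exact Or.inl h
      · refine Or.inr ⟨j, c, ?_, rfl⟩
        by_cases hj : j = p
        · subst hj; omega
        · rw [he j hj]; exact hc
  rw [h, cellCount_insert (finite_pointed m d) isAff_pointed (isAff_pointed_fun p _)]
  refine ⟨(1, 0), fun z => ?_⟩
  simp only [Prod.fst_add, Prod.snd_add, add_zero]
  ring

/-- Restriction to `y - x p = c` with `c ≥ 1`: eliminating `x p` turns `x i - x p = b` and
`x p - x i = b` into `y - x i = c - b` and `y - x i = c + b`. -/
lemma cellCount_pointed_restrict {m : ℕ} {d : Fin (m + 1) → ℕ} {d' : Fin m → ℕ} (p : Fin (m + 1))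
    (c : ℕ) (hc : d p ≤ c) (hc1 : 1 ≤ c)
    (hlt : ∀ i : Fin m, p.succAbove i < p → ∀ e, e < d' i ↔
      e < d (p.succAbove i) ∨ e + 1 = c ∨ e = c)
    (hgt : ∀ i : Fin m, p < p.succAbove i → ∀ e, e < d' i ↔
      e < d (p.succAbove i) ∨ e = c ∨ e = c + 1) :
    cellCount (pointed (m + 1) d) {z | z.1 - z.2 p - (c : ℝ) = 0} =
      cellCount (pointed m d') Set.univ := by
  refine cellCount_transport
    (fun z : ℝ × (Fin m → ℝ) =>
      ((z.1, p.insertNth (z.1 - c) z.2) : ℝ × (Fin (m + 1) → ℝ))) ?_ ?_ ?_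
  · ext z
    constructor
    · rintro ⟨w, -, rfl⟩
      simp
    · intro hz
      change z.1 - z.2 p - (c : ℝ) = 0 at hz
      refine ⟨(z.1, p.removeNth z.2), trivial, ?_⟩
      have : z.1 - c = z.2 p := by linarith
      simp only [this, Fin.insertNth_self_removeNth]
  · rintro f (⟨i, j, hij, b, hb, rfl⟩ | ⟨j, b, hb, rfl⟩)
    · rcases Fin.eq_self_or_eq_succAbove p i with rfl | ⟨i, rfl⟩
      · rcases Fin.eq_self_or_eq_succAbove i j with rfl | ⟨j, rfl⟩
        · exact absurd hij (lt_irrefl _)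
        · refine Or.inl ⟨_, Or.inr ⟨j, c + b, ?_, rfl⟩, Or.inl fun z _ => ?_⟩
          · rw [hgt j hij]; omega
          · simp only [Fin.insertNth_apply_same, Fin.insertNth_apply_succAbove]
            push_cast; ring
      · rcases Fin.eq_self_or_eq_succAbove p j with rfl | ⟨j, rfl⟩
        · refine Or.inl ⟨_, Or.inr ⟨i, c - b, ?_, rfl⟩, Or.inr fun z _ => ?_⟩
          · rw [hlt i hij]; omega
          · simp only [Fin.insertNth_apply_same, Fin.insertNth_apply_succAbove]
            rw [Nat.cast_sub (by omega)]; ring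
        · refine Or.inl ⟨_, Or.inl ⟨i, j, ?_, b, hb, rfl⟩, Or.inl fun z _ => ?_⟩
          · exact (Fin.strictMono_succAbove p).lt_iff_lt.1 hij
          · simp only [Fin.insertNth_apply_succAbove]
    · rcases Fin.eq_self_or_eq_succAbove p j with rfl | ⟨j, rfl⟩
      · refine Or.inr (Or.inl fun z _ => ?_)
        simp only [Fin.insertNth_apply_same]
        have : (b : ℝ) < c := by exact_mod_cast hb.trans_le hc
        linarith
      · refine Or.inl ⟨_, Or.inr ⟨j, b, ?_, rfl⟩, Or.inl fun z _ => ?_⟩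
        · rcases lt_or_gt_of_ne (Fin.succAbove_ne p j) with h | h
          · rw [hlt j h]; exact Or.inl hb
          · rw [hgt j h]; exact Or.inl hb
        · simp only [Fin.insertNth_apply_succAbove]
  · rintro g (⟨i, j, hij, b, hb, rfl⟩ | ⟨j, b, hb, rfl⟩)
    · refine ⟨_, Or.inl ⟨p.succAbove i, p.succAbove j, ?_, b, hb, rfl⟩, Or.inl fun z _ => ?_⟩
      · exact Fin.strictMono_succAbove p hij
      · simp only [Fin.insertNth_apply_succAbove]
    · have hold : b < d (p.succAbove j) → ∃ f ∈ pointed (m + 1) d,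
          (∀ z ∈ (Set.univ : Set (ℝ × (Fin m → ℝ))),
            f (z.1, p.insertNth (z.1 - c) z.2) = z.1 - z.2 j - b) ∨
          (∀ z ∈ (Set.univ : Set (ℝ × (Fin m → ℝ))),
            f (z.1, p.insertNth (z.1 - c) z.2) = -(z.1 - z.2 j - b)) := by
        intro h
        refine ⟨_, Or.inr ⟨p.succAbove j, b, h, rfl⟩, Or.inl fun z _ => ?_⟩
        simp only [Fin.insertNth_apply_succAbove]
      rcases lt_or_gt_of_ne (Fin.succAbove_ne p j) with h | h
      · rcases (hlt j h b).1 hb with h' | h'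
        · exact hold h'
        · refine ⟨_, Or.inl ⟨p.succAbove j, p, h, c - b, by omega, rfl⟩, Or.inr fun z _ => ?_⟩
          simp only [Fin.insertNth_apply_same, Fin.insertNth_apply_succAbove]
          rw [Nat.cast_sub (by omega)]; ring
      · rcases (hgt j h b).1 hb with h' | h'
        · exact hold h'
        · refine ⟨_, Or.inl ⟨p, p.succAbove j, h, b - c, by omega, rfl⟩, Or.inl fun z _ => ?_⟩
          simp only [Fin.insertNth_apply_same, Fin.insertNth_apply_succAbove]
          rw [Nat.cast_sub (by omega)]; ring

/-- Restriction to `y = x p` when only hyperplanes `y = x j` have been added. -/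
lemma cellCount_pointed_restrict_zero {m : ℕ} {d : Fin m → ℕ} (p : Fin m) (hd : ∀ j, d j ≤ 1)
    (hp : d p = 0) :
    cellCount (pointed m d) {z | z.1 - z.2 p - (d p : ℝ) = 0} =
      cellCount (shiFun m) Set.univ := by
  refine cellCount_transport (fun x : Fin m → ℝ => ((x p, x) : ℝ × (Fin m → ℝ))) ?_ ?_ ?_
  · ext z
    constructor
    · rintro ⟨w, -, rfl⟩
      simp [hp]
    · intro hz
      change z.1 - z.2 p - (d p : ℝ) = 0 at hz
      rw [hp] at hz
      exact ⟨z.2, trivial, Prod.ext (by simp only [Nat.cast_zero] at hz ⊢; linarith) rfl⟩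
  · rintro f (⟨i, j, hij, b, hb, rfl⟩ | ⟨j, b, hb, rfl⟩)
    · exact Or.inl ⟨_, ⟨i, j, hij, b, hb, rfl⟩, Or.inl fun _ _ => rfl⟩
    · have h1 := hd j
      obtain rfl : b = 0 := by omega
      rcases lt_trichotomy j p with h | rfl | h
      · exact Or.inl ⟨_, ⟨j, p, h, 0, by omega, rfl⟩, Or.inr fun _ _ => by simp⟩
      · omega
      · exact Or.inl ⟨_, ⟨p, j, h, 0, by omega, rfl⟩, Or.inl fun _ _ => rfl⟩
  · rintro g ⟨i, j, hij, b, hb, rfl⟩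
    exact ⟨_, Or.inl ⟨i, j, hij, b, hb, rfl⟩, Or.inl fun _ _ => rfl⟩

lemma cellCount_pointed_free (m : ℕ) :
    cellCount (pointed m fun _ => 0) Set.univ = cellCount (shiFun m) Set.univ := by
  symm
  refine cellCount_transport (fun z : ℝ × (Fin m → ℝ) => z.2) ?_ ?_ ?_
  · ext x
    simp
  · rintro g ⟨i, j, hij, b, hb, rfl⟩
    exact Or.inl ⟨_, Or.inl ⟨i, j, hij, b, hb, rfl⟩, Or.inl fun _ _ => rfl⟩
  · rintro f (⟨i, j, hij, b, hb, rfl⟩ | ⟨j, b, hb, rfl⟩)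
    · exact ⟨_, ⟨i, j, hij, b, hb, rfl⟩, Or.inl fun _ _ => rfl⟩
    · exact absurd hb (Nat.not_lt_zero _)

lemma cellCount_shiFun_succ (m : ℕ) :
    cellCount (shiFun (m + 1)) Set.univ = cellCount (pointed m fun _ => 2) Set.univ := by
  refine cellCount_transport
    (fun z : ℝ × (Fin m → ℝ) => (Fin.cons z.1 z.2 : Fin (m + 1) → ℝ)) ?_ ?_ ?_
  · ext x
    simp only [Set.image_univ, Set.mem_range, Set.mem_univ, iff_true]
    exact ⟨(x 0, Fin.tail x), Fin.cons_self_tail x⟩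
  · rintro g ⟨i, j, hij, b, hb, rfl⟩
    induction j using Fin.cases with
    | zero => exact absurd hij (Fin.not_lt_zero _)
    | succ j =>
      induction i using Fin.cases with
      | zero => exact Or.inl ⟨_, Or.inr ⟨j, b, Nat.lt_succ_of_le hb, rfl⟩, Or.inl fun _ _ => by simp⟩
      | succ i =>
        exact Or.inl ⟨_, Or.inl ⟨i, j, Fin.succ_lt_succ_iff.1 hij, b, hb, rfl⟩,
          Or.inl fun _ _ => by simp⟩
  · rintro f (⟨i, j, hij, b, hb, rfl⟩ | ⟨j, b, hb, rfl⟩)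
    · exact ⟨_, ⟨i.succ, j.succ, Fin.succ_lt_succ_iff.2 hij, b, hb, rfl⟩,
        Or.inl fun _ _ => by simp⟩
    · exact ⟨_, ⟨0, j.succ, Fin.succ_pos j, b, Nat.le_of_lt_succ hb, rfl⟩, Or.inl fun _ _ => by simp⟩

lemma cellCount_pointed_ones (m s : ℕ) (hs : s ≤ m) :
    cellCount (pointed m fun j => if j.val < s then 1 else 0) Set.univ =
      (s + 1) * cellCount (shiFun m) Set.univ := by
  induction s with
  | zero => simpa using cellCount_pointed_free m
  | succ s ih =>
    have hd : (if (⟨s, hs⟩ : Fin m).val < s then 1 else 0) = 0 := by simp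
    rw [cellCount_pointed_succ (d := fun j => if j.val < s then 1 else 0) ⟨s, hs⟩ (by simp),
      ih (by omega), cellCount_pointed_restrict_zero _ (fun j => by split_ifs <;> omega) hd]
    · ring
    · intro j hj
      have : j.val ≠ s := fun h => hj (Fin.ext h)
      have h : j.val < s + 1 ↔ j.val < s := by omega
      simp only [h]

/-- The cell count along the chain of arrangements obtained by adding hyperplanes one by one:
every `y - x j = c` with `0 ≤ c ≤ k`, and also `y - x j = k + 1` for the indices `j ≥ s`.
Deletion–restriction at `y - x s = k + 1` leads to the same family with parameters
`(m - 1, k + 1, s)`. -/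
lemma cellCount_pointed (m : ℕ) : ∀ k t s : ℕ, s + t = m →
    cellCount (pointed m fun j => k + 1 + if s ≤ j.val then 1 else 0) Set.univ =
      (m + k + 1) ^ s * (m + k + 2) ^ t := by
  induction m with
  | zero =>
    intro k t s h
    obtain ⟨rfl, rfl⟩ : s = 0 ∧ t = 0 := by omega
    have hempty : ∀ d, pointed 0 d = ∅ := by
      intro d
      refine Set.eq_empty_of_forall_notMem ?_
      rintro f (⟨i, -⟩ | ⟨j, -⟩)
      · exact i.elim0
      · exact j.elim0
    rw [hempty]
    have : cells (∅ : Set (ℝ × (Fin 0 → ℝ) → ℝ)) Set.univ = {∅} := by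
      ext a
      constructor
      · rintro ⟨x, -, rfl⟩
        simp [signPattern]
      · rintro rfl
        exact ⟨0, ⟨trivial, by simp⟩, by simp [signPattern]⟩
    simp [cellCount, this]
  | succ m ihm =>
    have hstep : ∀ k t : ℕ, (∀ s, s + t = m + 1 →
        cellCount (pointed (m + 1) fun j => k + 1 + if s ≤ j.val then 1 else 0) Set.univ =
          (m + 1 + k + 1) ^ s * (m + 1 + k + 2) ^ t) → ∀ s, s + (t + 1) = m + 1 →
        cellCount (pointed (m + 1) fun j => k + 1 + if s ≤ j.val then 1 else 0) Set.univ =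
          (m + 1 + k + 1) ^ s * (m + 1 + k + 2) ^ (t + 1) := by
      intro k t iht s hs
      have hsm : s < m + 1 := by omega
      rw [cellCount_pointed_succ (d := fun j => k + 1 + if s + 1 ≤ j.val then 1 else 0) ⟨s, hsm⟩
        (by simp), iht (s + 1) (by omega),
        cellCount_pointed_restrict (d' := fun j => k + 1 + 1 + if s ≤ j.val then 1 else 0)
          ⟨s, hsm⟩ _ le_rfl (by omega), ihm (k + 1) t s (by omega)]
      · ring
      · intro i hi e
        have hi' := (Fin.succAbove_lt_iff_castSucc_lt _ _).1 hi
        rw [Fin.succAbove_of_castSucc_lt _ _ hi']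
        have h' : i.val < s := hi'
        simp only [Fin.val_castSucc]
        split_ifs <;> omega
      · intro i hi e
        have hi' := (Fin.lt_succAbove_iff_le_castSucc _ _).1 hi
        rw [Fin.succAbove_of_le_castSucc _ _ hi']
        have h' : s ≤ i.val := hi'
        simp only [Fin.val_succ]
        split_ifs <;> omega
      · intro j hj
        have : j.val ≠ s := fun h => hj (Fin.ext h)
        have h : s ≤ j.val ↔ s + 1 ≤ j.val := by omega
        simp only [h]
    intro k
    induction k with
    | zero =>
      intro t
      induction t with
      | zero =>
        intro s hs
        obtain rfl : s = m + 1 := by omega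
        have h1 := cellCount_pointed_ones (m + 1) (m + 1) le_rfl
        have h2 := ihm 0 m 0 (by omega)
        rw [cellCount_shiFun_succ] at h1
        have e1 : (fun j : Fin (m + 1) => if j.val < m + 1 then 1 else 0) =
            fun j => 0 + 1 + if m + 1 ≤ j.val then 1 else 0 := by
          funext j
          have := j.2
          split_ifs <;> omega
        have e2 : (fun j : Fin m => 0 + 1 + if 0 ≤ j.val then 1 else 0) = fun _ => 2 := by
          funext j
          simp
        rw [e2] at h2
        rw [e1, h2] at h1
        rw [h1]
        ring
      | succ t iht => exact hstep _ t iht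
    | succ k ihk =>
      intro t
      induction t with
      | zero =>
        intro s hs
        obtain rfl : s = m + 1 := by omega
        have h1 := ihk (m + 1) 0 (by omega)
        have e1 : (fun j : Fin (m + 1) => k + 1 + if 0 ≤ j.val then 1 else 0) =
            fun j => k + 1 + 1 + if m + 1 ≤ j.val then 1 else 0 := by
          funext j
          have := j.2
          split_ifs <;> omega
        rw [e1] at h1
        rw [h1]
        ring
      | succ t iht => exact hstep _ t iht

end Shi

/-! ### Counting parking functions by the cycle lemma -/

section Parking

/-- The number of indices with `(f i).val < k`. -/
def below {n : ℕ} (f : Fin n → Fin (n + 1)) (k : ℕ) : ℕ :=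
  (Finset.univ.filter (fun i => (f i).val < k)).card

lemma val_sub_const {n : ℕ} (v p : Fin (n + 1)) :
    (v - p).val = if p.val ≤ v.val then v.val - p.val else v.val + (n + 1) - p.val := by
  have hv := v.2
  have hp := p.2
  rw [Fin.val_sub]
  split_ifs with h
  · rw [show n + 1 - p.val + v.val = (v.val - p.val) + (n + 1) by omega, Nat.add_mod_right,
      Nat.mod_eq_of_lt (by omega)]
  · rw [Nat.mod_eq_of_lt (by omega)]; omega

lemma below_eq_sum {n : ℕ} (f : Fin n → Fin (n + 1)) (k : ℕ) :
    below f k = ∑ i, if (f i).val < k then 1 else 0 := by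
  rw [below, Finset.card_filter]

/-- Counting in a rotated function, when the window `[p, p + j)` does not wrap around. -/
lemma below_sub_of_le {n : ℕ} (f : Fin n → Fin (n + 1)) (p : Fin (n + 1)) (j : ℕ)
    (h : p.val + j ≤ n + 1) :
    below (fun i => f i - p) j + below f p.val = below f (p.val + j) := by
  simp only [below_eq_sum, ← Finset.sum_add_distrib]
  refine Finset.sum_congr rfl fun i _ => ?_
  have := (f i).2
  rw [val_sub_const]
  split_ifs <;> omega

/-- Counting in a rotated function, when the window `[p, p + j)` wraps around. -/
lemma below_sub_of_gt {n : ℕ} (f : Fin n → Fin (n + 1)) (p : Fin (n + 1)) (j : ℕ)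
    (h : n + 1 ≤ p.val + j) (hj : j ≤ n + 1) :
    below (fun i => f i - p) j + below f p.val = n + below f (p.val + j - (n + 1)) := by
  have hn : n = below f (n + 1) := by simp [below_eq_sum, Fin.is_le]
  suffices hs : below (fun i => f i - p) j + below f p.val =
      below f (n + 1) + below f (p.val + j - (n + 1)) by rw [hs, ← hn]
  simp only [below_eq_sum, ← Finset.sum_add_distrib]
  refine Finset.sum_congr rfl fun i _ => ?_
  have := (f i).2
  have := p.2
  rw [val_sub_const]
  split_ifs <;> omega

/-- Cycle lemma: exactly one rotation of `f` is a parking function. With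
`F k = below f k - k`, the rotation by `p` is a parking function exactly when `p` is the first
place where `F` attains its minimum on `[0, n]`. -/
lemma existsUnique_rotation {n : ℕ} (f : Fin n → Fin (n + 1)) :
    ∃! p : Fin (n + 1), IsPF n (fun i => (f i - p).val) := by
  have hPF : ∀ p : Fin (n + 1), IsPF n (fun i => (f i - p).val) ↔
      ∀ k ≤ n, k ≤ below (fun i => f i - p) k := fun p => Iff.rfl
  set F : ℕ → ℤ := fun k => (below f k : ℤ) - k with hF
  have h1 : ∀ (p : Fin (n + 1)) (j : ℕ), p.val + j ≤ n + 1 →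
      (below (fun i => f i - p) j : ℤ) - j = F (p.val + j) - F p.val := by
    intro p j h
    have := below_sub_of_le f p j h
    simp only [hF]; push_cast; omega
  have h2 : ∀ (p : Fin (n + 1)) (j : ℕ), n + 1 ≤ p.val + j → j ≤ n + 1 →
      (below (fun i => f i - p) j : ℤ) - j = F (p.val + j - (n + 1)) - F p.val - 1 := by
    intro p j h h'
    have := below_sub_of_gt f p j h h'
    simp only [hF]; push_cast [Nat.cast_sub h]; omega
  have hex : ∃ p, p < n + 1 ∧ ∀ k, k < n + 1 → F p ≤ F k := by
    obtain ⟨q, hq, hq'⟩ := Finset.exists_min_image (Finset.range (n + 1)) F ⟨0, by simp⟩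
    exact ⟨q, by simpa using hq, fun k hk => hq' k (by simpa using hk)⟩
  classical
  obtain ⟨hp, hmin⟩ := Nat.find_spec hex
  have hfirst : ∀ k < Nat.find hex, F (Nat.find hex) < F k := by
    intro k hk
    by_contra hcon
    exact Nat.find_min hex hk ⟨hk.trans hp, fun l hl => (not_lt.1 hcon).trans (hmin l hl)⟩
  have hgood : IsPF n (fun i => (f i - ⟨Nat.find hex, hp⟩).val) := by
    refine (hPF _).2 fun k hk => ?_
    rcases Nat.lt_or_ge (Nat.find hex + k) (n + 1) with h | h
    · have := h1 ⟨_, hp⟩ k h.le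
      have := hmin _ h
      simp only at *
      omega
    · have := h2 ⟨_, hp⟩ k h (by omega)
      have := hfirst (Nat.find hex + k - (n + 1)) (by omega)
      simp only at *
      omega
  refine ⟨⟨Nat.find hex, hp⟩, hgood, ?_⟩
  · -- two good rotations `p < p'` would give `F p ≤ F p'` and `F p' ≤ F p - 1`
    have huniq : ∀ p p' : Fin (n + 1), p.val < p'.val → IsPF n (fun i => (f i - p).val) →
        IsPF n (fun i => (f i - p').val) → False := by
      intro p p' hlt hp hp'
      have hb := p'.2
      have a := (hPF p).1 hp (p'.val - p.val) (by omega)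
      have b := (hPF p').1 hp' (p.val + (n + 1) - p'.val) (by omega)
      have a' := h1 p (p'.val - p.val) (by omega)
      have b' := h2 p' (p.val + (n + 1) - p'.val) (by omega) (by omega)
      rw [show p.val + (p'.val - p.val) = p'.val by omega] at a'
      rw [show p'.val + (p.val + (n + 1) - p'.val) - (n + 1) = p.val by omega] at b'
      omega
    intro p' hp'
    rcases lt_trichotomy p'.val (Nat.find hex) with h | h | h
    · exact (huniq p' ⟨_, hp⟩ h hp' hgood).elim
    · exact Fin.ext h
    · exact (huniq ⟨_, hp⟩ p' h hgood hp').elim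

lemma IsPF.lt {n : ℕ} {a : Fin n → ℕ} (h : IsPF n a) (i : Fin n) : a i < n := by
  have h1 := h n le_rfl
  have h2 : (Finset.univ.filter (fun i => a i < n)) = Finset.univ :=
    Finset.eq_univ_of_card _ (le_antisymm (Finset.card_le_univ _) (by simpa using h1))
  exact (Finset.mem_filter.1 (h2.symm.subset (Finset.mem_univ i))).2

lemma finite_isPF (n : ℕ) : {a : Fin n → ℕ | IsPF n a}.Finite := by
  refine (Set.finite_range (fun (g : Fin n → Fin (n + 1)) i => (g i).val)).subset ?_
  intro a ha
  exact ⟨fun i => ⟨a i, (IsPF.lt ha i).trans n.lt_succ_self⟩, rfl⟩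

/-- A rotation-invariant family of functions to `Fin (n + 1)` contains `n + 1` times as many
functions as parking functions. -/
lemma ncard_parking_mul {n : ℕ} (P : (Fin n → ℕ) → Prop) (Q : (Fin n → Fin (n + 1)) → Prop)
    (hPQ : ∀ g : Fin n → Fin (n + 1), P (fun i => (g i).val) ↔ Q g)
    (hQ : ∀ (g : Fin n → Fin (n + 1)) (p : Fin (n + 1)), Q (fun i => g i - p) ↔ Q g) :
    {a : Fin n → ℕ | IsPF n a ∧ P a}.ncard * (n + 1) = {g | Q g}.ncard := by
  have hprod : ({a : Fin n → ℕ | IsPF n a ∧ P a} ×ˢ (Set.univ : Set (Fin (n + 1)))).ncard =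
      {a : Fin n → ℕ | IsPF n a ∧ P a}.ncard * (n + 1) := by
    rw [Set.ncard_prod, Set.ncard_univ, Nat.card_eq_fintype_card, Fintype.card_fin]
  rw [← hprod]
  symm
  choose p hp hp' using fun f : Fin n → Fin (n + 1) => existsUnique_rotation f
  refine Set.ncard_congr (fun g _ => ((fun i => (g i - p g).val), p g)) ?_ ?_ ?_
  · intro g hg
    exact ⟨⟨hp g, (hPQ _).2 ((hQ g _).2 hg)⟩, trivial⟩
  · intro g h _ _ e
    rw [Prod.mk.injEq] at e
    obtain ⟨e1, e2⟩ := e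
    funext i
    have := congrFun e1 i
    rw [← e2] at this
    exact sub_left_injective (Fin.ext this)
  · rintro ⟨a, q⟩ ⟨⟨ha, haP⟩, -⟩
    -- the function whose rotation by `q` is `a`
    let g : Fin n → Fin (n + 1) := fun i => ⟨a i, (IsPF.lt ha i).trans n.lt_succ_self⟩ + q
    have hg : (fun i => (g i - q).val) = a := by
      funext i
      simp [g]
    have hpq : q = p g := hp' g q (by simpa only [hg] using ha)
    refine ⟨g, ?_, ?_⟩
    · change Q g
      rw [← hQ g q, ← hPQ, hg]; exact haP
    · rw [← hpq, hg]

lemma ncard_parking (n : ℕ) : {a : Fin n → ℕ | IsPF n a}.ncard * (n + 1) = (n + 1) ^ n := by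
  have := ncard_parking_mul (n := n) (fun _ => True) (fun _ => True) (by simp) (by simp)
  simpa [Set.ncard_univ] using this

lemma ncard_parking_eq (m : ℕ) :
    {a : Fin (m + 2) → ℕ | IsPF (m + 2) a ∧ a 0 = a 1}.ncard = (m + 3) ^ m := by
  have h := ncard_parking_mul (n := m + 2) (fun a => a 0 = a 1) (fun g => g 0 = g 1)
    (fun g => Fin.ext_iff.symm) (fun g p => sub_left_inj)
  have hc : {g : Fin (m + 2) → Fin (m + 2 + 1) | g 0 = g 1}.ncard = (m + 3) ^ (m + 1) := by
    have : {g : Fin (m + 2) → Fin (m + 2 + 1) | g 0 = g 1} =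
        Set.range (fun g : Fin (m + 1) → Fin (m + 2 + 1) =>
          (Fin.cons (g 0) g : Fin (m + 2) → Fin (m + 2 + 1))) := by
      ext g
      constructor
      · intro hg
        refine ⟨Fin.tail g, ?_⟩
        change g 0 = g 1 at hg
        have : Fin.tail g 0 = g 0 := hg.symm
        simp only [this, Fin.cons_self_tail]
      · rintro ⟨g, rfl⟩
        rfl
    rw [this, ← Set.image_univ, Set.ncard_image_of_injective, Set.ncard_univ]
    · simp
    · intro g h e
      exact (Fin.cons_inj.1 e).2
  rw [hc, pow_succ] at h
  exact Nat.eq_of_mul_eq_mul_right (by omega) h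

lemma ncard_parking_lt_eq_gt (m : ℕ) :
    {a : Fin (m + 2) → ℕ | IsPF (m + 2) a ∧ a 1 < a 0}.ncard =
      {a : Fin (m + 2) → ℕ | IsPF (m + 2) a ∧ a 0 < a 1}.ncard := by
  have hswap : ∀ a : Fin (m + 2) → ℕ, IsPF (m + 2) a →
      IsPF (m + 2) (a ∘ Equiv.swap 0 1) := by
    intro a ha k hk
    refine (ha k hk).trans (le_of_eq ?_)
    refine Finset.card_bij (fun i _ => Equiv.swap 0 1 i) ?_ ?_ ?_
    · intro i hi
      simpa using hi
    · intro i _ j _ e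
      exact (Equiv.swap 0 1).injective e
    · intro i hi
      exact ⟨Equiv.swap 0 1 i, by simpa using hi, by simp⟩
  refine Set.ncard_congr (fun a _ => a ∘ Equiv.swap 0 1) ?_ ?_ ?_
  · rintro a ⟨h, h'⟩
    exact ⟨hswap a h, by simpa using h'⟩
  · intro a b _ _ e
    exact (Equiv.swap (0 : Fin (m + 2)) 1).surjective.injective_comp_right e
  · rintro a ⟨h, h'⟩
    refine ⟨a ∘ Equiv.swap 0 1, ⟨hswap a h, by simpa using h'⟩, ?_⟩
    funext i
    simp

/-- The three parking numbers add up to `(m + 3) ^ (m + 1)`. -/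
lemma ncard_parking_sum (m : ℕ) :
    {a : Fin (m + 2) → ℕ | IsPF (m + 2) a ∧ a 1 < a 0}.ncard +
      {a : Fin (m + 2) → ℕ | IsPF (m + 2) a ∧ a 0 = a 1}.ncard +
      {a : Fin (m + 2) → ℕ | IsPF (m + 2) a ∧ a 0 < a 1}.ncard = (m + 3) ^ (m + 1) := by
  have hfin := finite_isPF (m + 2)
  have htot : {a : Fin (m + 2) → ℕ | IsPF (m + 2) a}.ncard = (m + 3) ^ (m + 1) := by
    have h := ncard_parking (m + 2)
    rw [pow_succ] at h
    exact Nat.eq_of_mul_eq_mul_right (by omega) h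
  have hfin' : ∀ P : (Fin (m + 2) → ℕ) → Prop, {a | IsPF (m + 2) a ∧ P a}.Finite :=
    fun P => hfin.subset fun a h => h.1
  have hd1 : Disjoint {a : Fin (m + 2) → ℕ | IsPF (m + 2) a ∧ a 1 < a 0}
      {a | IsPF (m + 2) a ∧ a 0 = a 1} := by
    rw [Set.disjoint_left]
    rintro a ⟨-, h⟩ ⟨-, h'⟩
    omega
  have hd2 : Disjoint ({a : Fin (m + 2) → ℕ | IsPF (m + 2) a ∧ a 1 < a 0} ∪
      {a | IsPF (m + 2) a ∧ a 0 = a 1}) {a | IsPF (m + 2) a ∧ a 0 < a 1} := by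
    rw [Set.disjoint_left]
    rintro a (⟨-, h⟩ | ⟨-, h⟩) ⟨-, h'⟩ <;> omega
  rw [← htot, ← Set.ncard_union_eq hd1 (hfin' _) (hfin' _),
    ← Set.ncard_union_eq hd2 ((hfin' _).union (hfin' _)) (hfin' _)]
  congr 1
  ext a
  simp only [Set.mem_union, Set.mem_ofPred_eq]
  have := lt_trichotomy (a 1) (a 0)
  grind

end Parking

/-! ### Regions of the Shi arrangement as cells -/

section Regions

lemma mem_shiComp_iff {n : ℕ} {x : Fin n → ℝ} : x ∈ shiComp n ↔ ∀ f ∈ shiFun n, f x ≠ 0 := by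
  constructor
  · rintro h f ⟨i, j, hij, c, hc, rfl⟩
    obtain ⟨h0, h1⟩ := h i j hij
    interval_cases c
    · simpa using h0
    · simpa [sub_eq_zero] using h1
  · intro h i j hij
    have h0 := h _ ⟨i, j, hij, 0, by omega, rfl⟩
    have h1 := h _ ⟨i, j, hij, 1, by omega, rfl⟩
    exact ⟨by simpa using h0, by simpa [sub_eq_zero] using h1⟩

/-- The region of `x` consists of the points with the same sign pattern: signs cannot change on a
connected set, and points with equal signs are joined by a segment. -/
lemma connectedComponentIn_shiComp {n : ℕ} {x : Fin n → ℝ} (hx : x ∈ shiComp n) :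
    connectedComponentIn (shiComp n) x =
      {y | y ∈ shiComp n ∧ signPattern (shiFun n) y = signPattern (shiFun n) x} := by
  ext y
  constructor
  · intro hy
    have hsub := connectedComponentIn_subset (shiComp n) x
    refine ⟨hsub hy, ?_⟩
    rw [signPattern_eq_iff]
    have hpre : IsPreconnected (connectedComponentIn (shiComp n) x) :=
      isPreconnected_connectedComponentIn
    have hconst : ∀ f ∈ shiFun n, ∀ u ∈ connectedComponentIn (shiComp n) x,
        ∀ v ∈ connectedComponentIn (shiComp n) x, 0 < f u → 0 < f v := by
      intro f hf u hu v hv hfu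
      by_contra hfv
      have hcont : Continuous f := by
        obtain ⟨i, j, -, c, -, rfl⟩ := hf
        fun_prop
      obtain ⟨w, hw, hw0⟩ := hpre.intermediate_value hv hu hcont.continuousOn
        ⟨not_lt.1 hfv, hfu.le⟩
      exact mem_shiComp_iff.1 (hsub hw) f hf hw0
    have hxx := mem_connectedComponentIn hx
    exact fun f hf => ⟨hconst f hf y hy x hxx, hconst f hf x hxx y hy⟩
  · rintro ⟨hy, hyx⟩
    have hseg : segment ℝ x y ⊆ shiComp n := by
      rw [segment_eq_image']
      rintro _ ⟨t, ⟨h0, h1⟩, rfl⟩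
      exact mem_shiComp_iff.2 (same_sign_segment isAff_shiFun (mem_shiComp_iff.1 hx)
        (mem_shiComp_iff.1 hy) hyx.symm h0 h1).1
    exact (convex_segment x y).isPreconnected.subset_connectedComponentIn
      (left_mem_segment ℝ x y) hseg (right_mem_segment ℝ x y)

lemma ncard_regions {n : ℕ} (W : Set (Fin n → ℝ))
    (hW : ∀ x y, signPattern (shiFun n) x = signPattern (shiFun n) y → x ∈ shiComp n →
      y ∈ shiComp n → x ∈ W → y ∈ W) :
    {R : Set (Fin n → ℝ) | IsShiRegion n R ∧ ∀ x ∈ R, x ∈ W}.ncard = cellCount (shiFun n) W := by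
  have himg : {R : Set (Fin n → ℝ) | IsShiRegion n R ∧ ∀ x ∈ R, x ∈ W} =
      connectedComponentIn (shiComp n) '' offPoints (shiFun n) W := by
    ext R
    constructor
    · rintro ⟨⟨x, hx, rfl⟩, h⟩
      exact ⟨x, ⟨h x (mem_connectedComponentIn hx), mem_shiComp_iff.1 hx⟩, rfl⟩
    · rintro ⟨x, ⟨hxW, hx⟩, rfl⟩
      have hx' := mem_shiComp_iff.2 hx
      refine ⟨⟨x, hx', rfl⟩, fun y hy => ?_⟩
      rw [connectedComponentIn_shiComp hx'] at hy
      exact hW x y hy.2.symm hx' hy.1 hxW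
  rw [himg]
  refine ncard_image_eq_of_fibers _ _ _ ?_
  rintro x ⟨-, hx⟩ y ⟨-, hy⟩
  have hx' := mem_shiComp_iff.2 hx
  have hy' := mem_shiComp_iff.2 hy
  rw [connectedComponentIn_shiComp hx', connectedComponentIn_shiComp hy']
  constructor
  · intro h
    have : x ∈ {z | z ∈ shiComp n ∧ signPattern (shiFun n) z = signPattern (shiFun n) y} :=
      h ▸ ⟨hx', rfl⟩
    exact this.2
  · intro h
    rw [h]

end Regions

/-! ### The three region numbers -/

section Three

/-- The Shi functions other than the two that involve the first two coordinates only. -/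
def shiRest (m : ℕ) : Set ((Fin (m + 2) → ℝ) → ℝ) :=
  {f | ∃ i j : Fin (m + 2), i < j ∧ ¬(i = 0 ∧ j = 1) ∧ ∃ c : ℕ, c ≤ 1 ∧
    f = fun x : Fin (m + 2) → ℝ => x i - x j - c}

/-- The function `x 0 - x 1 - c`. -/
def gap (m : ℕ) (c : ℕ) : (Fin (m + 2) → ℝ) → ℝ := fun x => x 0 - x 1 - c

lemma shiFun_eq_insert (m : ℕ) :
    shiFun (m + 2) = insert (gap m 0) (insert (gap m 1) (shiRest m)) := by
  ext f
  constructor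
  · rintro ⟨i, j, hij, c, hc, rfl⟩
    by_cases h : i = 0 ∧ j = 1
    · obtain ⟨rfl, rfl⟩ := h
      interval_cases c
      · exact Or.inl rfl
      · exact Or.inr (Or.inl rfl)
    · exact Or.inr (Or.inr ⟨i, j, hij, h, c, hc, rfl⟩)
  · rintro (rfl | rfl | ⟨i, j, hij, -, c, hc, rfl⟩)
    · exact ⟨0, 1, by simp, 0, by omega, rfl⟩
    · exact ⟨0, 1, by simp, 1, by omega, rfl⟩
    · exact ⟨i, j, hij, c, hc, rfl⟩

lemma shiRest_subset (m : ℕ) : shiRest m ⊆ shiFun (m + 2) := by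
  rintro f ⟨i, j, hij, -, h⟩
  exact ⟨i, j, hij, h⟩

lemma finite_shiRest (m : ℕ) : (shiRest m).Finite := (finite_shiFun _).subset (shiRest_subset m)

lemma isAff_shiRest {m : ℕ} : ∀ f ∈ shiRest m, IsAff f :=
  fun f hf => isAff_shiFun f (shiRest_subset m hf)

lemma isAff_gap (m c : ℕ) : IsAff (gap m c) := by
  intro x v t
  simp only [gap, Pi.add_apply, Pi.smul_apply, smul_eq_mul]
  ring

lemma gap_direction (m c : ℕ) : ∃ v, ∀ x, gap m c (x + v) = gap m c x + 1 := by
  refine ⟨Pi.single 0 1, fun x => ?_⟩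
  simp only [gap, Pi.add_apply, Pi.single_eq_same]
  rw [Pi.single_eq_of_ne (by simp)]
  ring

/-- Exchanging the first two coordinates preserves `shiRest`. -/
lemma cellCount_swap (m : ℕ) :
    cellCount (shiRest m) {x | 0 < gap m 0 x} = cellCount (shiRest m) {x | gap m 0 x < 0} := by
  have hswap : ∀ i j : Fin (m + 2), i < j → ¬(i = 0 ∧ j = 1) →
      Equiv.swap 0 1 i < Equiv.swap 0 1 j ∧ ¬(Equiv.swap 0 1 i = 0 ∧ Equiv.swap 0 1 j = 1) := by
    intro i j hij hne
    have h01 : (0 : Fin (m + 2)) ≠ 1 := by simp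
    by_cases hi0 : i = 0
    · subst hi0
      have hj1 : j ≠ 1 := fun h => hne ⟨rfl, h⟩
      have hj0 : j ≠ 0 := hij.ne'
      rw [Equiv.swap_apply_left, Equiv.swap_apply_of_ne_of_ne hj0 hj1]
      refine ⟨?_, fun h => h01 h.1.symm⟩
      rw [Fin.lt_def, Fin.val_one]
      rw [Ne, Fin.ext_iff, Fin.val_one] at hj1
      rw [Ne, Fin.ext_iff, Fin.val_zero] at hj0
      omega
    · have hj0 : j ≠ 0 := fun h => by subst h; exact absurd hij (Fin.not_lt_zero _)
      have hj1 : j ≠ 1 := by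
        rintro rfl
        have hi : i.val < 1 := hij
        exact hi0 (Fin.ext (Nat.lt_one_iff.1 hi))
      rw [Equiv.swap_apply_of_ne_of_ne hj0 hj1]
      refine ⟨?_, fun h => hj1 h.2⟩
      by_cases hi1 : i = 1
      · subst hi1
        rw [Equiv.swap_apply_right]
        exact Fin.pos_of_ne_zero hj0
      · rwa [Equiv.swap_apply_of_ne_of_ne hi0 hi1]
  refine cellCount_transport (fun x => x ∘ Equiv.swap 0 1) ?_ ?_ ?_
  · ext x
    constructor
    · rintro ⟨y, hy, rfl⟩
      simp only [Set.mem_ofPred_eq, gap, Function.comp, Equiv.swap_apply_left,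
        Equiv.swap_apply_right, Nat.cast_zero] at hy ⊢
      linarith
    · intro hx
      refine ⟨x ∘ Equiv.swap 0 1, ?_, by funext i; simp⟩
      simp only [Set.mem_ofPred_eq, gap, Function.comp, Equiv.swap_apply_left,
        Equiv.swap_apply_right, Nat.cast_zero] at hx ⊢
      linarith
  · rintro f ⟨i, j, hij, hne, c, hc, rfl⟩
    obtain ⟨h1, h2⟩ := hswap i j hij hne
    exact Or.inl ⟨_, ⟨_, _, h1, h2, c, hc, rfl⟩, Or.inl fun _ _ => rfl⟩
  · rintro f ⟨i, j, hij, hne, c, hc, rfl⟩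
    obtain ⟨h1, h2⟩ := hswap i j hij hne
    exact ⟨_, ⟨_, _, h1, h2, c, hc, rfl⟩, Or.inl fun _ _ => by simp⟩

/-- On `x 0 - x 1 = 1` the other Shi hyperplanes become `y - x j ∈ {0, 1, 2}` and the Shi
hyperplanes in the remaining coordinates, where `y = x 0`. -/
lemma cellCount_gap_restrict (m : ℕ) :
    cellCount (shiRest m) {x | gap m 1 x = 0} = (m + 3) ^ m := by
  have hcount := cellCount_pointed m 1 m 0 (by omega)
  have e : (fun j : Fin m => 1 + 1 + if 0 ≤ j.val then 1 else 0) = fun _ => 3 := by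
    funext j
    simp
  rw [e, pow_zero, one_mul] at hcount
  rw [show m + 3 = m + 1 + 2 by omega, ← hcount]
  refine cellCount_transport (fun z : ℝ × (Fin m → ℝ) =>
    (Fin.cons z.1 (Fin.cons (z.1 - 1) z.2 : Fin (m + 1) → ℝ) : Fin (m + 2) → ℝ)) ?_ ?_ ?_
  · ext x
    constructor
    · rintro ⟨z, -, rfl⟩
      change z.1 - (z.1 - 1) - ((1 : ℕ) : ℝ) = 0
      simp
    · intro hx
      change x 0 - x 1 - ((1 : ℕ) : ℝ) = 0 at hx
      refine ⟨(x 0, Fin.tail (Fin.tail x)), trivial, ?_⟩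
      have h1 : x 0 - 1 = Fin.tail x 0 := by
        change x 0 - 1 = x 1
        push_cast at hx
        linarith
      simp only [h1, Fin.cons_self_tail]
  · rintro f ⟨i, j, hij, hne, c, hc, rfl⟩
    induction j using Fin.cases with
    | zero => exact absurd hij (Fin.not_lt_zero _)
    | succ j =>
      induction j using Fin.cases with
      | zero =>
        refine absurd ⟨?_, rfl⟩ hne
        have : i.val < 1 := hij
        exact Fin.ext (Nat.lt_one_iff.1 this)
      | succ j =>
        induction i using Fin.cases with
        | zero =>
          exact Or.inl ⟨_, Or.inr ⟨j, c, by change c < 3; omega, rfl⟩, Or.inl fun _ _ => by simp⟩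
        | succ i =>
          induction i using Fin.cases with
          | zero =>
            refine Or.inl ⟨_, Or.inr ⟨j, c + 1, by change c + 1 < 3; omega, rfl⟩,
              Or.inl fun z _ => ?_⟩
            simp only [Fin.cons_succ, Fin.cons_zero]
            push_cast; ring
          | succ i =>
            refine Or.inl ⟨_, Or.inl ⟨i, j, ?_, c, hc, rfl⟩, Or.inl fun _ _ => by simp⟩
            exact Fin.succ_lt_succ_iff.1 (Fin.succ_lt_succ_iff.1 hij)
  · have h2 : ∀ j : Fin m, j.succ.succ ≠ 1 := by
      intro j h
      rw [Fin.ext_iff, Fin.val_one, Fin.val_succ, Fin.val_succ] at h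
      omega
    rintro f (⟨i, j, hij, b, hb, rfl⟩ | ⟨j, b, hb, rfl⟩)
    · exact ⟨_, ⟨i.succ.succ, j.succ.succ, by simpa using hij, fun h => h2 j h.2, b, hb, rfl⟩,
        Or.inl fun _ _ => by simp⟩
    · change b < 3 at hb
      by_cases hb2 : b ≤ 1
      · exact ⟨_, ⟨0, j.succ.succ, Fin.succ_pos _, fun h => h2 j h.2, b, hb2, rfl⟩,
          Or.inl fun _ _ => by simp⟩
      · obtain rfl : b = 2 := by omega
        refine ⟨_, ⟨(0 : Fin (m + 1)).succ, j.succ.succ, ?_, fun h => h2 j h.2, 1, le_rfl, rfl⟩,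
          Or.inl fun z _ => ?_⟩
        · exact Fin.succ_lt_succ_iff.2 (Fin.succ_pos _)
        · simp only [Fin.cons_succ, Fin.cons_zero]
          push_cast; ring

/-- `L`, `M`, `G` are the numbers of regions on which `x 0 - x 1` is negative, between `0` and
`1`, and greater than `1`; `h = (m + 3) ^ m` is the number of cells on the hyperplane
`x 0 - x 1 = 1`. By the swap symmetry `L` is also the number of cells of `shiRest` with
`x 0 - x 1 > 0`, so cutting these along that hyperplane gives `M + G = L + h`; and every cell on
the hyperplane extends to both of its sides, so `h ≤ M` and `h ≤ G`. -/
lemma region_numbers (m : ℕ) :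
    ∃ L M G : ℕ,
      {R : Set (Fin (m + 2) → ℝ) | IsShiRegion (m + 2) R ∧ ∀ x ∈ R, x 0 - x 1 < 0}.ncard = L ∧
      {R : Set (Fin (m + 2) → ℝ) | IsShiRegion (m + 2) R ∧
        ∀ x ∈ R, 0 < x 0 - x 1 ∧ x 0 - x 1 < 1}.ncard = M ∧
      {R : Set (Fin (m + 2) → ℝ) | IsShiRegion (m + 2) R ∧ ∀ x ∈ R, 1 < x 0 - x 1}.ncard = G ∧
      L + M + G = (m + 3) ^ (m + 1) ∧ M + G = L + (m + 3) ^ m ∧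
      (m + 3) ^ m ≤ M ∧ (m + 3) ^ m ≤ G := by
  have hfin := finite_shiRest m
  have g0 : ∀ x, gap m 0 x = x 0 - x 1 := fun x => by simp [gap]
  have g1 : ∀ x, gap m 1 x = x 0 - x 1 - 1 := fun x => by simp [gap]
  have hL : {x | gap m 0 x < 0} = {x : Fin (m + 2) → ℝ | x 0 - x 1 < 0} := by simp only [g0]
  have hM : {x | 0 < gap m 0 x} ∩ {x | gap m 1 x < 0} =
      {x : Fin (m + 2) → ℝ | 0 < x 0 - x 1 ∧ x 0 - x 1 < 1} := by
    ext x
    simp only [g0, g1, Set.mem_inter_iff, Set.mem_ofPred_eq, sub_neg]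
  have hG : {x | 0 < gap m 0 x} ∩ {x | 0 < gap m 1 x} =
      {x : Fin (m + 2) → ℝ | 1 < x 0 - x 1} := by
    ext x
    simp only [g0, g1, Set.mem_inter_iff, Set.mem_ofPred_eq]
    constructor
    · rintro ⟨-, h⟩; linarith
    · intro h; constructor <;> linarith
  have hH : {x | 0 < gap m 0 x} ∩ {x | gap m 1 x = 0} = {x | gap m 1 x = 0} := by
    ext x
    simp only [g0, g1, Set.mem_inter_iff, Set.mem_ofPred_eq, and_iff_right_iff_imp]
    intro h; linarith
  have hopen : AlgOpen {x | 0 < gap m 0 x} := fun x hx v => (isAff_gap m 0).eventually_pos hx v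
  have hconv : Convex ℝ {x | 0 < gap m 0 x} := by
    rw [convex_iff_add_mem]
    intro x hx y hy a b ha hb hab
    have := (isAff_gap m 0).pos_of_segment (x := x) (y := y) hb (by linarith) hx hy
    have e : a • x + b • y = x + b • (y - x) := by
      rw [show a = 1 - b by linarith]
      module
    rw [e]
    exact this
  -- regions on which `x 0 - x 1` lies in a fixed interval are cells of `shiRest`
  have hmem0 : gap m 0 ∈ shiFun (m + 2) := by rw [shiFun_eq_insert]; exact Or.inl rfl
  have hmem1 : gap m 1 ∈ shiFun (m + 2) := by rw [shiFun_eq_insert]; exact Or.inr (Or.inl rfl)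
  have hsgn : ∀ x y, signPattern (shiFun (m + 2)) x = signPattern (shiFun (m + 2)) y →
      x ∈ shiComp (m + 2) → y ∈ shiComp (m + 2) →
      (x 0 - x 1 < 0 → y 0 - y 1 < 0) ∧ (0 < x 0 - x 1 → 0 < y 0 - y 1) ∧
      (x 0 - x 1 < 1 → y 0 - y 1 < 1) ∧ (1 < x 0 - x 1 → 1 < y 0 - y 1) := by
    intro x y hxy hx hy
    have a0 := signPattern_eq_iff.1 hxy _ hmem0
    have a1 := signPattern_eq_iff.1 hxy _ hmem1
    have b0 := mem_shiComp_iff.1 hy _ hmem0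
    have b1 := mem_shiComp_iff.1 hy _ hmem1
    rw [g0, g0] at a0
    rw [g1, g1, sub_pos, sub_pos] at a1
    rw [g0] at b0
    rw [g1, sub_ne_zero] at b1
    refine ⟨fun h => ?_, a0.1, fun h => ?_, a1.1⟩
    · exact lt_of_le_of_ne (not_lt.1 fun h' => h.not_gt (a0.2 h')) b0
    · exact lt_of_le_of_ne (not_lt.1 fun h' => h.not_gt (a1.2 h')) b1
  have hrest : ∀ W : Set (Fin (m + 2) → ℝ),
      ((∀ x ∈ W, 0 < gap m 0 x) ∨ (∀ x ∈ W, gap m 0 x < 0)) →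
      ((∀ x ∈ W, 0 < gap m 1 x) ∨ (∀ x ∈ W, gap m 1 x < 0)) →
      cellCount (shiFun (m + 2)) W = cellCount (shiRest m) W := by
    intro W h0 h1
    rw [shiFun_eq_insert, cellCount_insert_of_const h0, cellCount_insert_of_const h1]
  have rL := ncard_regions {x : Fin (m + 2) → ℝ | x 0 - x 1 < 0}
    (fun x y h hx hy => (hsgn x y h hx hy).1)
  have rM := ncard_regions {x : Fin (m + 2) → ℝ | 0 < x 0 - x 1 ∧ x 0 - x 1 < 1}
    (fun x y h hx hy hxW => ⟨(hsgn x y h hx hy).2.1 hxW.1, (hsgn x y h hx hy).2.2.1 hxW.2⟩)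
  have rG := ncard_regions {x : Fin (m + 2) → ℝ | 1 < x 0 - x 1}
    (fun x y h hx hy => (hsgn x y h hx hy).2.2.2)
  have sL := hrest {x | gap m 0 x < 0} (Or.inr fun x hx => hx) (Or.inr fun x hx => by
    have : gap m 0 x < 0 := hx
    rw [g0] at this; rw [g1]; linarith)
  have sM := hrest ({x | 0 < gap m 0 x} ∩ {x | gap m 1 x < 0})
    (Or.inl fun x hx => hx.1) (Or.inr fun x hx => hx.2)
  have sG := hrest ({x | 0 < gap m 0 x} ∩ {x | 0 < gap m 1 x})
    (Or.inl fun x hx => hx.1) (Or.inl fun x hx => hx.2)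
  refine ⟨_, _, _, rL, rM, rG, ?_⟩
  rw [← hL, ← hM, ← hG, sL, sM, sG]
  have htot : cellCount (shiFun (m + 2)) Set.univ = (m + 3) ^ (m + 1) := by
    have := cellCount_pointed (m + 1) 0 (m + 1) 0 (by omega)
    have e : (fun j : Fin (m + 1) => 0 + 1 + if 0 ≤ j.val then 1 else 0) = fun _ => 2 := by
      funext j
      simp
    rw [e, pow_zero, one_mul] at this
    rw [cellCount_shiFun_succ, this]
  have hsum : cellCount (shiFun (m + 2)) Set.univ =
      cellCount (shiRest m) ({x | 0 < gap m 0 x} ∩ {x | 0 < gap m 1 x}) +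
      cellCount (shiRest m) ({x | 0 < gap m 0 x} ∩ {x | gap m 1 x < 0}) +
      cellCount (shiRest m) {x | gap m 0 x < 0} := by
    rw [shiFun_eq_insert, cellCount_insert_eq_add (hfin.insert _), Set.univ_inter, Set.univ_inter,
      cellCount_insert_eq_add hfin]
    congr 1
    refine cellCount_insert_of_const (Or.inr fun x hx => ?_)
    have : gap m 0 x < 0 := hx
    rw [g0] at this; rw [g1]; linarith
  have hsides := cellCount_sides hfin isAff_shiRest (isAff_gap m 1) (gap_direction m 1) hopen hconv
  have hsub := cells_restrict_subset hfin isAff_shiRest (isAff_gap m 1) (gap_direction m 1) hopen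
  rw [hH, cellCount_swap, cellCount_gap_restrict] at hsides
  rw [hH] at hsub
  rw [htot] at hsum
  refine ⟨by omega, by omega, ?_, ?_⟩
  · rw [← cellCount_gap_restrict m]
    exact Set.ncard_le_ncard (hsub.trans Set.inter_subset_right) (finite_cells hfin _)
  · rw [← cellCount_gap_restrict m]
    exact Set.ncard_le_ncard (hsub.trans Set.inter_subset_left) (finite_cells hfin _)

end Three

/-- The sorted parking partition `(p1, p2, p3)` majorises the sorted tree-poset
(region) partition `(r1, r2, r3)`. -/
theorem parking_partition_majorises_region_partition (n : ℕ) (hn : 2 ≤ n)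
    (p1 p2 p3 r1 r2 r3 : ℕ)
    (hp : ({p1, p2, p3} : Multiset ℕ) =
      {Set.ncard {a : Fin n → ℕ | IsPF n a ∧ a ⟨1, by omega⟩ < a ⟨0, by omega⟩},
        Set.ncard {a : Fin n → ℕ | IsPF n a ∧ a ⟨0, by omega⟩ = a ⟨1, by omega⟩},
        Set.ncard {a : Fin n → ℕ | IsPF n a ∧ a ⟨0, by omega⟩ < a ⟨1, by omega⟩}})
    (hp12 : p2 ≤ p1) (hp23 : p3 ≤ p2)
    (hr : ({r1, r2, r3} : Multiset ℕ) =
      {Set.ncard {R : Set (Fin n → ℝ) | IsShiRegion n R ∧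
          ∀ x ∈ R, x ⟨0, by omega⟩ - x ⟨1, by omega⟩ < 0},
        Set.ncard {R : Set (Fin n → ℝ) | IsShiRegion n R ∧
          ∀ x ∈ R, 0 < x ⟨0, by omega⟩ - x ⟨1, by omega⟩ ∧
            x ⟨0, by omega⟩ - x ⟨1, by omega⟩ < 1},
        Set.ncard {R : Set (Fin n → ℝ) | IsShiRegion n R ∧
          ∀ x ∈ R, 1 < x ⟨0, by omega⟩ - x ⟨1, by omega⟩}})
    (hr12 : r2 ≤ r1) (hr23 : r3 ≤ r2) :
    r1 ≤ p1 ∧ r1 + r2 ≤ p1 + p2 ∧ p1 + p2 + p3 = r1 + r2 + r3 := by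
  obtain ⟨m, rfl⟩ : ∃ m, n = m + 2 := ⟨n - 2, by omega⟩
  obtain ⟨L, M, G, hL, hM, hG, hsum, hMG, hM', hG'⟩ := region_numbers m
  have hpsum := ncard_parking_sum m
  have hpeq := ncard_parking_eq m
  have hpsymm := ncard_parking_lt_eq_gt m
  simp only [Fin.zero_eta, Fin.mk_one] at hp hr
  rw [hL, hM, hG] at hr
  rw [← hpsymm, hpeq] at hp hpsum
  generalize {a : Fin (m + 2) → ℕ | IsPF (m + 2) a ∧ a 1 < a 0}.ncard = a at hp hpsum
  have hpow : (m + 3) ^ (m + 1) = (m + 3) ^ m * m + 3 * (m + 3) ^ m := by ring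
  have hnn : 0 ≤ (m + 3) ^ m * m := Nat.zero_le _
  generalize (m + 3) ^ m * m = w at hpow hnn
  generalize (m + 3) ^ (m + 1) = T at *
  generalize (m + 3) ^ m = e at *
  have sp := congrArg Multiset.sum hp
  have sr := congrArg Multiset.sum hr
  simp only [Multiset.insert_eq_cons, Multiset.sum_cons, Multiset.sum_singleton] at sp sr
  have ha : a ∈ ({p1, p2, p3} : Multiset ℕ) := by rw [hp]; simp
  have he : e ∈ ({p1, p2, p3} : Multiset ℕ) := by rw [hp]; simp
  have h1 : r1 ∈ ({L, M, G} : Multiset ℕ) := by rw [← hr]; simp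
  have h3 : r3 ∈ ({L, M, G} : Multiset ℕ) := by rw [← hr]; simp
  simp only [Multiset.insert_eq_cons, Multiset.mem_cons, Multiset.mem_singleton] at ha he h1 h3
  -- `L = a`, and `M, G ≥ e` with `M + G = a + e`, so all of `L, M, G` lie in `[e, a]`
  have hLa : L = a := by omega
  have hr1 : r1 ≤ a := by omega
  have hr3 : e ≤ r3 := by omega
  have hp1 : a ≤ p1 := by omega
  have hp3 : p3 ≤ e := by omega
  refine ⟨by omega, by omega, by omega⟩
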